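/- Let n ≥ 0 and let w ≤ u be elements of the Boolean lattice {0,1}^n (with the pointwise partial order). Call two maximal chains from w to u adjacent if they differ in exactly one element. Then any two maximal chains from w to u are connected by a finite sequence of maximal chains from w to u in which consecutive chains are adjacent. (Equivalently: any two directed edge paths from u to w in the cube category are related by a sequence of swaps across 2-dimensional faces.) -/

import Mathlib

/-- A maximal chain from `w` to `u` in the Boolean lattice of subsets of `Fin n`
(representing `{0,1}^n` with the pointwise order): a sequence
`w = c 0 ⊆ c 1 ⊆ … ⊆ c m = u` in which each step increases the cardinality by
exactly one. -/
def IsMaxChain' (n m : ℕ) (w u : Finset (Fin n))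
    (c : Fin (m + 1) → Finset (Fin n)) : Prop :=
  c 0 = w ∧ c (Fin.last m) = u ∧
  ∀ j : Fin m, c j.castSucc ⊆ c j.succ ∧
    (c j.succ).card = (c j.castSucc).card + 1

/-- Two maximal chains from `w` to `u` (of the same length) are adjacent if they
differ in exactly one position. -/
def AdjacentChains (n m : ℕ) (w u : Finset (Fin n))
    (c c' : Fin (m + 1) → Finset (Fin n)) : Prop :=
  IsMaxChain' n m w u c ∧ IsMaxChain' n m w u c' ∧ ∃! j : Fin (m + 1), c j ≠ c' j

/-!
The argument is an induction on the length of the chains. If `c` and `c'` pass through the same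
first element above `w`, the induction hypothesis applies to their tails. Otherwise let `x ≠ y` be
those first elements. By upper semimodularity `x ⊔ y` covers both, and it lies below `u`. Pushing
the rest of `c` upwards by joins gives a saturated chain `e` from `x ⊔ y` to `u` whose length is two
less than that of `c`. The induction hypothesis above `x` connects `c` to `w ⋖ x ⋖ e`, one swap
across the square `w, x, y, x ⊔ y` leads to `w ⋖ y ⋖ e`, and this chain is connected to `c'` by
the induction hypothesis above `y`.
-/

open Matrix (vecCons)

/-- A saturated chain `w = c 0 ⋖ c 1 ⋖ ⋯ ⋖ c m = u`. This is the order-theoretic form of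
`IsMaxChain'`, with the cardinality condition on steps replaced by the covering relation. -/
structure IsSaturatedChain {α : Type*} [Preorder α] {m : ℕ} (w u : α) (c : Fin (m + 1) → α) :
    Prop where
  head_eq : c 0 = w
  last_eq : c (Fin.last m) = u
  covBy (j : Fin m) : c j.castSucc ⋖ c j.succ

/-- Two saturated chains from `w` to `u`, of the same length, that differ in exactly one position;
the counterpart of `AdjacentChains` in an arbitrary preorder. -/
structure AdjacentSaturatedChains {α : Type*} [Preorder α] {m : ℕ} (w u : α)
    (c c' : Fin (m + 1) → α) : Prop where
  left : IsSaturatedChain w u c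
  right : IsSaturatedChain w u c'
  existsUnique_ne : ∃! j, c j ≠ c' j

section Preorder

variable {α : Type*} [Preorder α] {m : ℕ} {w x y v u : α}

namespace IsSaturatedChain

theorem cons {d : Fin (m + 1) → α} (hwx : w ⋖ x) (hd : IsSaturatedChain x u d) :
    IsSaturatedChain w u (vecCons w d) where
  head_eq := rfl
  last_eq := hd.last_eq
  covBy j := by
    cases j using Fin.cases with
    | zero => simpa [hd.head_eq] using hwx
    | succ j => exact hd.covBy j

theorem exists_eq_cons {c : Fin (m + 2) → α} (hc : IsSaturatedChain w u c) :
    ∃ x d, w ⋖ x ∧ IsSaturatedChain x u d ∧ c = vecCons w d := by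
  obtain ⟨rfl, hlast, hcov⟩ := hc
  exact ⟨c 1, Matrix.vecTail c, hcov 0, ⟨rfl, hlast, fun j => hcov j.succ⟩,
    (Matrix.cons_head_tail c).symm⟩

theorem le {c : Fin (m + 1) → α} (hc : IsSaturatedChain w u c) : w ≤ u := by
  have hmono : Monotone c := Fin.monotone_iff_le_succ.2 fun j => (hc.covBy j).le
  simpa only [hc.head_eq, hc.last_eq] using hmono (Fin.zero_le (Fin.last m))

theorem eq_of_length_eq_zero {c c' : Fin 1 → α} (hc : IsSaturatedChain w u c)
    (hc' : IsSaturatedChain w u c') : c = c' :=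
  funext fun i => by rw [Fin.fin_one_eq_zero i, hc.head_eq, hc'.head_eq]

end IsSaturatedChain

namespace AdjacentSaturatedChains

theorem cons {d d' : Fin (m + 1) → α} (hwx : w ⋖ x) (h : AdjacentSaturatedChains x u d d') :
    AdjacentSaturatedChains w u (vecCons w d) (vecCons w d') where
  left := h.left.cons hwx
  right := h.right.cons hwx
  existsUnique_ne := by
    obtain ⟨j, hj, huniq⟩ := h.existsUnique_ne
    refine ⟨j.succ, hj, fun i hi => ?_⟩
    cases i using Fin.cases with
    | zero => exact absurd rfl hi
    | succ i => rw [huniq i hi]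

theorem of_square {e : Fin (m + 1) → α} (hxy : x ≠ y) (hwx : w ⋖ x) (hwy : w ⋖ y)
    (hxv : x ⋖ v) (hyv : y ⋖ v) (he : IsSaturatedChain v u e) :
    AdjacentSaturatedChains w u (vecCons w (vecCons x e)) (vecCons w (vecCons y e)) where
  left := (he.cons hxv).cons hwx
  right := (he.cons hyv).cons hwy
  existsUnique_ne := by
    refine ⟨1, hxy, fun i hi => ?_⟩
    cases i using Fin.cases with
    | zero => exact absurd rfl hi
    | succ i =>
      cases i using Fin.cases with
      | zero => rfl
      | succ i => exact absurd rfl hi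

end AdjacentSaturatedChains

end Preorder

section IsWeakUpperModularLattice

variable {α : Type*} [Lattice α] [IsWeakUpperModularLattice α] {m : ℕ} {w x y v u : α}

theorem covBy_sup_and_covBy_sup_of_covBy (hxy : x ≠ y) (hwx : w ⋖ x) (hwy : w ⋖ y) :
    x ⋖ x ⊔ y ∧ y ⋖ x ⊔ y := by
  obtain rfl : x ⊓ y = w := hwx.wcovBy.inf_eq hwy.wcovBy hxy
  exact ⟨hwx.sup_of_inf_of_inf_left hwy, hwx.sup_of_inf_of_inf_right hwy⟩

theorem IsSaturatedChain.exists_of_covBy_of_le {c : Fin (m + 1) → α}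
    (hc : IsSaturatedChain w u c) (hwv : w ⋖ v) (hvu : v ≤ u) :
    ∃ k, ∃ d : Fin (k + 1) → α, m = k + 1 ∧ IsSaturatedChain v u d := by
  induction m generalizing w v with
  | zero =>
    obtain rfl : w = u := hc.head_eq.symm.trans hc.last_eq
    exact absurd hvu hwv.lt.not_ge
  | succ m ih =>
    obtain ⟨x, d, hwx, hd, -⟩ := hc.exists_eq_cons
    obtain rfl | hxv := eq_or_ne x v
    · exact ⟨m, d, rfl, hd⟩
    · obtain ⟨hx, hv⟩ := covBy_sup_and_covBy_sup_of_covBy hxv hwx hwv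
      obtain ⟨k, e, rfl, he⟩ := ih hd hx (sup_le hd.le hvu)
      exact ⟨k + 1, vecCons v e, rfl, he.cons hv⟩

theorem statement17_general {c c' : Fin (m + 1) → α}
    (hc : IsSaturatedChain w u c) (hc' : IsSaturatedChain w u c') :
    Relation.ReflTransGen (AdjacentSaturatedChains w u) c c' := by
  induction m generalizing w with
  | zero => rw [hc.eq_of_length_eq_zero hc']
  | succ m ih =>
    obtain ⟨x, d, hwx, hd, rfl⟩ := hc.exists_eq_cons
    obtain ⟨y, d', hwy, hd', rfl⟩ := hc'.exists_eq_cons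
    have connect_above {z : α} {a b : Fin (m + 1) → α} (hwz : w ⋖ z)
        (ha : IsSaturatedChain z u a) (hb : IsSaturatedChain z u b) :
        Relation.ReflTransGen (AdjacentSaturatedChains w u) (vecCons w a) (vecCons w b) :=
      (ih ha hb).lift (vecCons w) fun _ _ h => h.cons hwz
    obtain rfl | hxy := eq_or_ne x y
    · exact connect_above hwx hd hd'
    obtain ⟨hx, hy⟩ := covBy_sup_and_covBy_sup_of_covBy hxy hwx hwy
    obtain ⟨k, e, rfl, he⟩ := hd.exists_of_covBy_of_le hx (sup_le hd.le hd'.le)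
    have swap : AdjacentSaturatedChains w u (vecCons w (vecCons x e)) (vecCons w (vecCons y e)) :=
      .of_square hxy hwx hwy hx hy he
    exact ((connect_above hwx hd (he.cons hx)).tail swap).trans
      (connect_above hwy (he.cons hy) hd')

end IsWeakUpperModularLattice

theorem finset_covBy_iff_subset_and_card_eq {α : Type*} {s t : Finset α} :
    s ⋖ t ↔ s ⊆ t ∧ t.card = s.card + 1 := by
  rw [covBy_iff_lt_covBy_grade (𝕆 := ℕ), Finset.grade_eq, Finset.grade_eq,
    Nat.covBy_iff_add_one_eq, eq_comm]
  refine and_congr_left fun hcard => ⟨fun h => h.le, fun h => h.lt_of_ne ?_⟩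
  rintro rfl
  omega

section BooleanLattice

variable {n m : ℕ} {w u : Finset (Fin n)} {c c' : Fin (m + 1) → Finset (Fin n)}

theorem isMaxChain'_iff_isSaturatedChain : IsMaxChain' n m w u c ↔ IsSaturatedChain w u c := by
  simp only [IsMaxChain', ← finset_covBy_iff_subset_and_card_eq]
  exact ⟨fun ⟨h0, hm, hcov⟩ => ⟨h0, hm, hcov⟩, fun ⟨h0, hm, hcov⟩ => ⟨h0, hm, hcov⟩⟩

theorem AdjacentSaturatedChains.adjacentChains (h : AdjacentSaturatedChains w u c c') :
    AdjacentChains n m w u c c' :=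
  ⟨isMaxChain'_iff_isSaturatedChain.2 h.left, isMaxChain'_iff_isSaturatedChain.2 h.right,
    h.existsUnique_ne⟩

end BooleanLattice

/-- Any two maximal chains from `w` to `u` in the Boolean lattice `{0,1}^n` are
connected by a finite sequence of maximal chains in which consecutive chains are
adjacent (differ in exactly one element). -/
theorem statement17 (n : ℕ) (w u : Finset (Fin n)) (hwu : w ⊆ u)
    (m : ℕ) (hm : m = u.card - w.card)
    (c c' : Fin (m + 1) → Finset (Fin n))
    (hc : IsMaxChain' n m w u c) (hc' : IsMaxChain' n m w u c') :
    Relation.ReflTransGen (AdjacentChains n m w u) c c' :=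
  Relation.ReflTransGen.mono (fun _ _ h => h.adjacentChains) _ _ <|
    statement17_general (isMaxChain'_iff_isSaturatedChain.1 hc)
      (isMaxChain'_iff_isSaturatedChain.1 hc')
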